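/- arXiv:2202.09178 — 2 statements merged into one kernel-verified Lean document; each statement's English description precedes it below -/
import Mathlib

section
/- For all sufficiently small τ ∈ (0,1) there exist constants c₁ > 1 and c₂ ∈ (0,1) such that for all sufficiently small R > 0, all k ∈ ℕ with R² < τ^k < R, and all z ∈ ℝ for which there exist coprime p₀ ∈ ℤ and q₀ ∈ ℕ with c₁·τ^{k/2} ≤ |z − p₀/q₀| ≤ c₂·q₀^{-1}·√R, one has N(z,R,k,τ) ≈ τ^{-k}·R, where the implicit constants in ≈ depend only on τ. More precisely: there exists τ₀ ∈ (0,1) such that for every τ ∈ (0,τ₀) there exist c₁ > 1, c₂ ∈ (0,1), constants 0 < a ≤ b and R₀ > 0 such that for all R ∈ (0,R₀), all k ∈ ℕ with R² < τ^k < R, and all z ∈ ℝ admitting coprime p₀ ∈ ℤ, q₀ ∈ ℕ with c₁·τ^{k/2} ≤ |z − p₀/q₀| ≤ c₂·q₀^{-1}·√R, one has a·τ^{-k}·R ≤ N(z,R,k,τ) ≤ b·τ^{-k}·R. -/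
/-- `N z R τ k` is the number of reduced rationals `p/q` (with `p ∈ ℤ`, `q ∈ ℕ`,
`gcd(p,q) = 1`) whose denominator satisfies `τ⁻ᵏ < q² ≤ τ⁻⁽ᵏ⁺¹⁾` and which lie
within distance `R` of `z`. -/
noncomputable def ratCount (z R τ : ℝ) (k : ℕ) : ℕ :=
  Set.ncard {pq : ℤ × ℕ |
    Int.gcd pq.1 pq.2 = 1 ∧
    (τ ^ k)⁻¹ < (pq.2 : ℝ) ^ 2 ∧ (pq.2 : ℝ) ^ 2 ≤ (τ ^ (k + 1))⁻¹ ∧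
    |(pq.1 : ℝ) / (pq.2 : ℝ) - z| ≤ R}

/-!
Put `Q = τ^{-k/2}` and `D = τ^{-(k+1)/2}`. Two reduced fractions with denominators at most `D` are
at least `D⁻²` apart, which gives the upper bound.

For the lower bound, Dirichlet's theorem covers the ball of radius `R / 2` about `z` by the
intervals of radius `1 / (q D)` about the rationals `p/q` with `q ≤ D`. The fraction `p₀/q₀`
isolates `z`: any rational closer to `z` than `p₀/q₀` has denominator at least `1 / √R`. Hence all
the intervals in the cover are short and stay within `R` of `z`, and the balls of radius
`1 / (2 q Q)` about the centres with `q ≤ Q`, which are disjoint, have total length `O(R)`. So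
these centres cover only a proportion `O(Q / D) = O(√τ)` of the ball, and the rest has to be
covered by the fractions with `Q < q ≤ D`, each of which covers at most `O(Q⁻²)`.
-/

open Metric MeasureTheory

section BallsInReal

variable {ι : Type*} {S : Finset ι} {x ρ : ι → ℝ} {c r : ℝ}

theorem sum_radius_le_of_pairwiseDisjoint_ball (hr : 0 ≤ r) (hρ : ∀ i ∈ S, 0 ≤ ρ i)
    (hdisj : (S : Set ι).PairwiseDisjoint fun i ↦ ball (x i) (ρ i))
    (hsub : ∀ i ∈ S, ball (x i) (ρ i) ⊆ closedBall c r) : ∑ i ∈ S, ρ i ≤ r := by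
  have hvol : ∑ i ∈ S, volume (ball (x i) (ρ i)) ≤ volume (closedBall c r) := by
    rw [← measure_biUnion_finset hdisj fun _ _ ↦ measurableSet_ball]
    exact measure_mono (Set.iUnion₂_subset hsub)
  simp only [Real.volume_ball, Real.volume_closedBall] at hvol
  rw [← ENNReal.ofReal_sum_of_nonneg fun i hi ↦ mul_nonneg zero_le_two (hρ i hi),
    ← Finset.mul_sum, ENNReal.ofReal_le_ofReal_iff (by positivity)] at hvol
  linarith

theorem radius_le_sum_of_closedBall_subset_biUnion (hρ : ∀ i ∈ S, 0 ≤ ρ i)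
    (hcover : closedBall c r ⊆ ⋃ i ∈ S, closedBall (x i) (ρ i)) : r ≤ ∑ i ∈ S, ρ i := by
  have hvol : volume (closedBall c r) ≤ ∑ i ∈ S, volume (closedBall (x i) (ρ i)) :=
    (measure_mono hcover).trans (measure_biUnion_finset_le _ _)
  simp only [Real.volume_closedBall] at hvol
  rw [← ENNReal.ofReal_sum_of_nonneg fun i hi ↦ mul_nonneg zero_le_two (hρ i hi),
    ← Finset.mul_sum,
    ENNReal.ofReal_le_ofReal_iff (mul_nonneg zero_le_two (Finset.sum_nonneg hρ))] at hvol
  linarith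

end BallsInReal

section RatDen

variable {K : Type*} [Field K] [LinearOrder K] [IsStrictOrderedRing K]

theorem inv_den_mul_den_le_abs_sub {r s : ℚ} (h : r ≠ s) :
    (r.den * s.den : K)⁻¹ ≤ |(r : K) - s| := by
  have hden : (r - s).den ≤ r.den * s.den :=
    Nat.le_of_dvd (Nat.mul_pos r.pos s.pos) (Rat.sub_den_dvd r s)
  have hnum : (1 : K) ≤ |((r - s).num : K)| := by
    exact_mod_cast Int.one_le_abs (Rat.num_ne_zero.mpr (sub_ne_zero.mpr h))
  calc (r.den * s.den : K)⁻¹ ≤ ((r - s).den : K)⁻¹ := by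
        have := (r - s).pos
        gcongr
        exact_mod_cast hden
    _ ≤ |((r - s).num : K)| / (r - s).den := by
        rw [inv_eq_one_div]
        gcongr
    _ = |(r : K) - s| := by
        rw [← Rat.cast_sub, Rat.cast_def (r - s), abs_div, Nat.abs_cast]

theorem inv_den_le_of_abs_sub_lt {z : K} {r r₀ : ℚ} (h : |r - z| < |z - r₀|) :
    (r.den : K)⁻¹ ≤ 2 * r₀.den * |z - r₀| := by
  have hne : r ≠ r₀ := by
    rintro rfl
    exact h.ne (abs_sub_comm _ _)
  have hden : (0 : K) < r₀.den := mod_cast r₀.pos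
  have hsep : (r.den : K)⁻¹ * (r₀.den : K)⁻¹ ≤ 2 * |z - r₀| := by
    rw [← mul_inv]
    linarith [inv_den_mul_den_le_abs_sub (K := K) hne, abs_sub_le (r : K) z r₀]
  rw [← div_eq_mul_inv, div_le_iff₀ hden] at hsep
  linarith

end RatDen

theorem pairwiseDisjoint_ball_of_den_le {S : Set ℚ} {D : ℝ} (hS : ∀ r ∈ S, (r.den : ℝ) ≤ D) :
    S.PairwiseDisjoint fun r ↦ ball (r : ℝ) ((r.den * D)⁻¹ / 2) := by
  intro r hr s hs hrs
  have hr_le : (r.den * D)⁻¹ ≤ (r.den * s.den : ℝ)⁻¹ := by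
    have := hS s hs
    gcongr
  have hs_le : (s.den * D)⁻¹ ≤ (r.den * s.den : ℝ)⁻¹ := by
    have := hS r hr
    rw [mul_comm (r.den : ℝ)]
    gcongr
  apply ball_disjoint_ball
  rw [Real.dist_eq]
  linarith [inv_den_mul_den_le_abs_sub (K := ℝ) hrs]

theorem exists_rat_den_le_and_abs_sub_le (x : ℝ) {D : ℝ} (hD : 1 ≤ D) :
    ∃ r : ℚ, (r.den : ℝ) ≤ D ∧ |x - r| ≤ (r.den * D)⁻¹ := by
  obtain ⟨r, happrox, hden⟩ := Real.exists_rat_abs_sub_le_and_den_le x (Nat.floor_pos.mpr hD)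
  refine ⟨r, (Nat.le_floor_iff (by positivity)).mp hden, happrox.trans ?_⟩
  have hfloor := (Nat.lt_floor_add_one D).le
  rw [one_div, mul_comm (r.den : ℝ)]
  gcongr

theorem sum_inv_den_mul_le_card_div {S : Finset ℚ} {Q D : ℝ} (hQ : 0 < Q) (hD : 0 < D)
    (hS : ∀ r ∈ S, Q ≤ r.den) : ∑ r ∈ S, (r.den * D)⁻¹ ≤ S.card / (Q * D) := by
  rw [div_eq_mul_inv, ← nsmul_eq_mul]
  refine Finset.sum_le_card_nsmul _ _ _ fun r hr ↦ ?_
  have := hS r hr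
  gcongr

/-- The rationals in the closed ball of radius `R` about `z` whose reduced denominator is at most
`D`, that is, a piece of a Farey sequence. The bound `D` is real so that it can be
`τ ^ (-k / 2)`. -/
def fareyBall (z R D : ℝ) : Set ℚ :=
  {r | (r.den : ℝ) ≤ D ∧ |r - z| ≤ R}

section FareyBall

variable {z R Q D : ℝ}

theorem card_le_of_subset_fareyBall (hR : 0 ≤ R) (hD : 0 < D) {S : Finset ℚ}
    (hS : (S : Set ℚ) ⊆ fareyBall z R D) : (S.card : ℝ) ≤ 2 * R * D ^ 2 + 1 := by
  have hdisj : (S : Set ℚ).PairwiseDisjoint fun r ↦ ball (r : ℝ) ((D * D)⁻¹ / 2) := by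
    refine (pairwiseDisjoint_ball_of_den_le fun r hr ↦ (hS hr).1).mono_on fun r hr ↦ ?_
    have := (hS hr).1
    apply ball_subset_ball
    gcongr
  have hsum : ∑ _r ∈ S, (D * D)⁻¹ / 2 ≤ R + (D * D)⁻¹ / 2 := by
    refine sum_radius_le_of_pairwiseDisjoint_ball (c := z) (by positivity)
      (fun _ _ ↦ by positivity) hdisj fun r hr ↦ ?_
    refine ball_subset_closedBall.trans (closedBall_subset_closedBall' ?_)
    rw [Real.dist_eq]
    linarith [(hS hr).2]
  rw [Finset.sum_const, nsmul_eq_mul] at hsum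
  field_simp at hsum
  linarith

theorem finite_fareyBall (hR : 0 ≤ R) (hD : 0 < D) : (fareyBall z R D).Finite := by
  by_contra hinf
  obtain ⟨n, hn⟩ := exists_nat_gt (2 * R * D ^ 2 + 1)
  obtain ⟨S, hS, rfl⟩ := Set.Infinite.exists_subset_card_eq hinf n
  exact hn.not_ge (card_le_of_subset_fareyBall hR hD hS)

theorem ncard_fareyBall_le (hR : 0 ≤ R) (hD : 0 < D) :
    ((fareyBall z R D).ncard : ℝ) ≤ 2 * R * D ^ 2 + 1 := by
  have hfin := finite_fareyBall (z := z) hR hD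
  rw [Set.ncard_eq_toFinset_card _ hfin]
  exact card_le_of_subset_fareyBall hR hD hfin.coe_toFinset.subset

theorem sum_inv_den_mul_le_of_subset_fareyBall (hR : 0 ≤ R) (hD : 0 < D) {S : Finset ℚ}
    (hS : (S : Set ℚ) ⊆ fareyBall z R D) (hden : ∀ r ∈ S, (r.den * D)⁻¹ ≤ R) :
    ∑ r ∈ S, (r.den * D)⁻¹ ≤ 3 * R := by
  have hsum : ∑ r ∈ S, (r.den * D)⁻¹ / 2 ≤ 3 * R / 2 := by
    refine sum_radius_le_of_pairwiseDisjoint_ball (c := z) (by positivity)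
      (fun _ _ ↦ by positivity) (pairwiseDisjoint_ball_of_den_le fun r hr ↦ (hS hr).1)
      fun r hr ↦ ?_
    refine ball_subset_closedBall.trans (closedBall_subset_closedBall' ?_)
    rw [Real.dist_eq]
    linarith [(hS hr).2, hden r hr]
  rw [← Finset.sum_div] at hsum
  linarith

theorem half_radius_le_sum_inv_den_mul (hD : 1 ≤ D)
    (hden : ∀ r : ℚ, |r - z| ≤ R / 2 + D⁻¹ → (r.den * D)⁻¹ ≤ R / 2) {S : Finset ℚ}
    (hS : fareyBall z R D ⊆ S) : R / 2 ≤ ∑ r ∈ S, (r.den * D)⁻¹ := by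
  refine radius_le_sum_of_closedBall_subset_biUnion (c := z) (x := fun r : ℚ ↦ (r : ℝ))
    (fun _ _ ↦ by positivity) fun x hx ↦ ?_
  rw [mem_closedBall, Real.dist_eq] at hx
  obtain ⟨r, hrD, hxr⟩ := exists_rat_den_le_and_abs_sub_le x hD
  have hinv : (r.den * D)⁻¹ ≤ D⁻¹ := by
    have hr : (1 : ℝ) ≤ r.den := mod_cast r.pos
    gcongr
    exact le_mul_of_one_le_left (by positivity) hr
  have hrz : |r - z| ≤ R / 2 + (r.den * D)⁻¹ := by
    linarith [abs_sub_le (r : ℝ) x z, abs_sub_comm (r : ℝ) x]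
  have hrR : |r - z| ≤ R := by linarith [hden r (by linarith)]
  exact Set.mem_biUnion (hS ⟨hrD, hrR⟩) hxr

theorem le_ncard_fareyBall_diff (hR : 0 ≤ R) (hQ : 1 ≤ Q) (hRQ : R ≤ Q⁻¹) (hQD : 12 * Q ≤ D)
    (hden : ∀ r : ℚ, |r - z| ≤ Q⁻¹ → (r.den * Q)⁻¹ ≤ R) :
    R * (Q * D) / 4 ≤ (fareyBall z R D \ fareyBall z R Q).ncard := by
  have hQ₀ : 0 < Q := by linarith
  have hD : 1 ≤ D := by linarith
  have hDQ : D⁻¹ ≤ Q⁻¹ / 12 := by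
    rw [div_eq_mul_inv, ← mul_inv, mul_comm Q]
    gcongr
  have hdenDQ (r : ℚ) : (r.den * D)⁻¹ ≤ (r.den * Q)⁻¹ / 12 := by
    rw [mul_inv, mul_inv, mul_div_assoc]
    gcongr
  obtain ⟨coarse, hcoarse⟩ := (finite_fareyBall (z := z) hR hQ₀).exists_finset_coe
  obtain ⟨fine, hfine⟩ :=
    ((finite_fareyBall (z := z) (D := D) hR (by linarith)).sdiff
      (t := fareyBall z R Q)).exists_finset_coe
  have hdisj : Disjoint coarse fine := by
    rw [← Finset.disjoint_coe, hcoarse, hfine]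
    exact Set.disjoint_sdiff_right
  have hcover : R / 2 ≤ ∑ r ∈ coarse ∪ fine, (r.den * D)⁻¹ := by
    refine half_radius_le_sum_inv_den_mul (z := z) hD (fun r hr ↦ ?_) ?_
    · linarith [hdenDQ r, hden r (by linarith)]
    · rw [Finset.coe_union, hcoarse, hfine, Set.union_sdiff_self]
      exact Set.subset_union_right
  have hsum_coarse : ∑ r ∈ coarse, (r.den * D)⁻¹ ≤ R / 4 := by
    calc ∑ r ∈ coarse, (r.den * D)⁻¹ ≤ (∑ r ∈ coarse, (r.den * Q)⁻¹) / 12 := by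
          rw [Finset.sum_div]
          exact Finset.sum_le_sum fun r _ ↦ hdenDQ r
      _ ≤ 3 * R / 12 := by
          gcongr
          exact sum_inv_den_mul_le_of_subset_fareyBall hR hQ₀ hcoarse.subset
            fun r hr ↦ hden r ((hcoarse.subset hr).2.trans hRQ)
      _ = R / 4 := by ring
  have hsum_fine : ∑ r ∈ fine, (r.den * D)⁻¹ ≤ fine.card / (Q * D) :=
    sum_inv_den_mul_le_card_div hQ₀ (by linarith) fun r hr ↦
      (not_le.mp fun h ↦ (hfine.subset hr).2 ⟨h, (hfine.subset hr).1.2⟩).le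
  rw [← hfine, Set.ncard_coe_finset, mul_div_right_comm, ← le_div_iff₀ (by positivity)]
  rw [Finset.sum_union hdisj] at hcover
  linarith

end FareyBall

section RatCount

variable {z R τ : ℝ} {k : ℕ}

theorem ratCount_eq_ncard_fareyBall_diff (hτ : 0 ≤ τ) :
    ratCount z R τ k =
      (fareyBall z R √(τ ^ (k + 1))⁻¹ \ fareyBall z R √(τ ^ k)⁻¹).ncard := by
  have hinj : Function.Injective fun r : ℚ ↦ (r.num, r.den) := fun r s h ↦
    Rat.ext (congrArg Prod.fst h) (congrArg Prod.snd h)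
  have le_sqrt_iff (q n : ℕ) : (q : ℝ) ≤ √(τ ^ n)⁻¹ ↔ (q : ℝ) ^ 2 ≤ (τ ^ n)⁻¹ :=
    Real.le_sqrt q.cast_nonneg (by positivity)
  rw [ratCount, ← Set.ncard_image_of_injective _ hinj]
  congr 1
  ext ⟨p, q⟩
  simp only [fareyBall, Set.mem_image, Set.mem_sdiff, Set.mem_ofPred_eq, Prod.mk.injEq, le_sqrt_iff]
  constructor
  · rintro ⟨hcop, hlt, hle, hz⟩
    have hq : q ≠ 0 := by
      rintro rfl
      rw [Nat.cast_zero, zero_pow two_ne_zero] at hlt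
      exact hlt.not_ge (by positivity)
    refine ⟨⟨p, q, hq, hcop⟩, ⟨⟨hle, ?_⟩, fun h ↦ hlt.not_ge h.1⟩, rfl, rfl⟩
    rwa [Rat.cast_def]
  · rintro ⟨r, ⟨⟨hle, hz⟩, hnot⟩, rfl, rfl⟩
    refine ⟨r.reduced, not_le.mp fun h ↦ hnot ⟨h, hz⟩, hle, ?_⟩
    rwa [← Rat.cast_def]

theorem ratCount_le (hτ : 0 < τ) (hR : τ ^ (k + 1) ≤ R) :
    ratCount z R τ k ≤ 3 * (τ ^ (k + 1))⁻¹ * R := by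
  have hpos : 0 < τ ^ (k + 1) := by positivity
  have hR₀ : 0 ≤ R := hpos.le.trans hR
  have hD : 0 < √(τ ^ (k + 1))⁻¹ := by positivity
  calc (ratCount z R τ k : ℝ) ≤ (fareyBall z R √(τ ^ (k + 1))⁻¹).ncard := by
        rw [ratCount_eq_ncard_fareyBall_diff hτ.le]
        exact mod_cast Set.ncard_le_ncard Set.sdiff_subset (finite_fareyBall hR₀ hD)
    _ ≤ 2 * R * √(τ ^ (k + 1))⁻¹ ^ 2 + 1 := ncard_fareyBall_le hR₀ hD
    _ = 2 * R * (τ ^ (k + 1))⁻¹ + 1 := by rw [Real.sq_sqrt (by positivity)]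
    _ ≤ 2 * R * (τ ^ (k + 1))⁻¹ + (τ ^ (k + 1))⁻¹ * R := by
        gcongr
        rwa [one_le_inv_mul₀ hpos]
    _ = 3 * (τ ^ (k + 1))⁻¹ * R := by ring

theorem le_ratCount {r₀ : ℚ} (hτ₀ : 0 < τ) (hτ : τ ≤ 1 / 144) (hR : R ^ 2 ≤ τ ^ k)
    (hkR : τ ^ k ≤ R) (hfar : √(τ ^ k) < |z - r₀|) (hclose : 2 * r₀.den * |z - r₀| ≤ √R) :
    3 * (τ ^ k)⁻¹ * R ≤ ratCount z R τ k := by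
  have hR₀ : 0 ≤ R := (by positivity : 0 ≤ τ ^ k).trans hkR
  set Q := √(τ ^ k)⁻¹ with hQ
  set D := √(τ ^ (k + 1))⁻¹
  have hQ_inv : Q⁻¹ = √(τ ^ k) := by rw [hQ, Real.sqrt_inv, inv_inv]
  have hQ_sq : Q ^ 2 = (τ ^ k)⁻¹ := Real.sq_sqrt (by positivity)
  have hQ_one : 1 ≤ Q := by
    rw [hQ, Real.one_le_sqrt]
    exact (one_le_inv₀ (by positivity)).mpr (pow_le_one₀ hτ₀.le (by linarith))
  have hQD : 12 * Q ≤ D := by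
    apply Real.le_sqrt_of_sq_le
    have : 144 ≤ τ⁻¹ := by rwa [le_inv_comm₀ (by norm_num) hτ₀, ← one_div]
    rw [mul_pow, hQ_sq, pow_succ' τ, mul_inv]
    gcongr
    linarith
  have hden (r : ℚ) (hr : |r - z| ≤ Q⁻¹) : (r.den * Q)⁻¹ ≤ R := by
    rw [hQ_inv] at hr
    calc (r.den * Q)⁻¹ = (r.den : ℝ)⁻¹ * √(τ ^ k) := by rw [mul_inv, hQ_inv]
      _ ≤ √R * √R := by
        gcongr
        exact (inv_den_le_of_abs_sub_lt (hr.trans_lt hfar)).trans hclose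
      _ = R := Real.mul_self_sqrt hR₀
  calc 3 * (τ ^ k)⁻¹ * R = R * (Q * (12 * Q)) / 4 := by rw [← hQ_sq]; ring
    _ ≤ R * (Q * D) / 4 := by gcongr
    _ ≤ ratCount z R τ k := by
      rw [ratCount_eq_ncard_fareyBall_diff hτ₀.le]
      refine le_ncard_fareyBall_diff hR₀ hQ_one ?_ hQD hden
      rw [hQ_inv]
      exact Real.le_sqrt_of_sq_le hR

end RatCount

/-- For all sufficiently small `τ ∈ (0,1)` there exist `c₁ > 1` and `c₂ ∈ (0,1)` such that
for all sufficiently small `R > 0`, all `k` with `R² < τ^k < R`, and all `z ∈ ℝ` admitting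
coprime `p₀ ∈ ℤ`, `q₀ ∈ ℕ` with `c₁·τ^{k/2} ≤ |z − p₀/q₀| ≤ c₂·q₀⁻¹·√R`, the count
`N(z,R,k,τ)` is comparable to `τ⁻ᵏ·R`, with constants depending only on `τ`. -/
theorem intermediateCountingRationals :
    ∃ τ₀ ∈ Set.Ioo (0 : ℝ) 1, ∀ τ ∈ Set.Ioo (0 : ℝ) τ₀,
      ∃ c₁ > (1 : ℝ), ∃ c₂ ∈ Set.Ioo (0 : ℝ) 1, ∃ a b R₀ : ℝ, 0 < a ∧ a ≤ b ∧ 0 < R₀ ∧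
        ∀ R ∈ Set.Ioo (0 : ℝ) R₀, ∀ k : ℕ, R ^ 2 < τ ^ k → τ ^ k < R →
          ∀ z : ℝ,
            (∃ p₀ : ℤ, ∃ q₀ : ℕ, 0 < q₀ ∧ Int.gcd p₀ q₀ = 1 ∧
              c₁ * τ ^ ((k : ℝ) / 2) ≤ |z - (p₀ : ℝ) / (q₀ : ℝ)| ∧
              |z - (p₀ : ℝ) / (q₀ : ℝ)| ≤ c₂ * ((q₀ : ℝ))⁻¹ * Real.sqrt R) →
            a * (τ ^ k)⁻¹ * R ≤ (ratCount z R τ k : ℝ) ∧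
            (ratCount z R τ k : ℝ) ≤ b * (τ ^ k)⁻¹ * R := by
  refine ⟨1 / 144, by norm_num, fun τ ⟨hτ₀, hτ⟩ ↦ ⟨2, by norm_num, 1 / 2, by norm_num, 3, 3 / τ, 1,
    by norm_num, ?_, by norm_num, ?_⟩⟩
  · rw [le_div_iff₀ hτ₀]
    linarith
  rintro R - k hRk hkR z ⟨p₀, q₀, hq₀, hcop, hfar, hclose⟩
  have hsqrt : τ ^ ((k : ℝ) / 2) = √(τ ^ k) := by
    rw [Real.sqrt_eq_rpow, ← Real.rpow_natCast_mul hτ₀.le, mul_one_div]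
  let r₀ : ℚ := ⟨p₀, q₀, hq₀.ne', hcop⟩
  have hr₀ : (p₀ : ℝ) / q₀ = r₀ := (Rat.cast_def r₀).symm
  rw [hsqrt, hr₀] at hfar
  rw [hr₀] at hclose
  constructor
  · refine le_ratCount (r₀ := r₀) hτ₀ hτ.le hRk.le hkR.le ?_ ?_
    · have : 0 < √(τ ^ k) := by positivity
      linarith
    · change 2 * (q₀ : ℝ) * |z - r₀| ≤ √R
      field_simp at hclose
      linarith
  · calc (ratCount z R τ k : ℝ) ≤ 3 * (τ ^ (k + 1))⁻¹ * R := by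
          refine ratCount_le hτ₀ (le_trans ?_ hkR.le)
          exact pow_le_pow_of_le_one hτ₀.le (by linarith) k.le_succ
      _ = 3 / τ * (τ ^ k)⁻¹ * R := by rw [pow_succ', mul_inv, ← mul_assoc, div_eq_mul_inv]
end

section
/- Let d ≥ 1, let p, p' ∈ ℝ^d and D, D' > 0. If the horoball tangent at p with diameter D and the horoball tangent at p' with diameter D' are disjoint, then ‖p − p'‖² ≥ D·D' (in particular p ≠ p'). -/
/-- The horoball tangent to the boundary `ℝᵈ × {0}` at `(p,0)` with (Euclidean)
diameter `D`: the open Euclidean ball of radius `D/2` centred at `(p, D/2)` in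
`ℝᵈ × ℝ` with the Euclidean norm. -/
def horoball {d : ℕ} (p : EuclideanSpace ℝ (Fin d)) (D : ℝ) :
    Set (EuclideanSpace ℝ (Fin d) × ℝ) :=
  {x : EuclideanSpace ℝ (Fin d) × ℝ | ‖x.1 - p‖ ^ 2 + (x.2 - D / 2) ^ 2 < (D / 2) ^ 2}

/-!
Two open balls of positive radius in a normed space are disjoint exactly when the distance of their
centres is at least the sum of their radii. By Pythagoras the centres `(p, D / 2)` and
`(p', D' / 2)` have squared distance `‖p - p'‖ ^ 2 + ((D - D') / 2) ^ 2`, and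
`((D + D') / 2) ^ 2 - ((D - D') / 2) ^ 2 = D * D'`.
-/

section TangentBall

open WithLp

variable {E : Type*} [SeminormedAddCommGroup E]

/-- The horoball tangent at `p` with diameter `D` over an arbitrary seminormed group `E` in place
of `ℝᵈ`. It lives in the `L²` product `WithLp 2 (E × ℝ)`, because the plain product `E × ℝ` carries
the sup distance. -/
def tangentBall (p : E) (D : ℝ) : Set (WithLp 2 (E × ℝ)) :=
  Metric.ball (toLp 2 (p, D / 2)) (D / 2)

theorem dist_toLp_prod_sq {F : Type*} [SeminormedAddCommGroup F] (x y : E × F) :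
    dist (toLp 2 x) (toLp 2 y) ^ 2 = ‖x.1 - y.1‖ ^ 2 + ‖x.2 - y.2‖ ^ 2 := by
  rw [dist_eq_norm, ← toLp_sub, prod_norm_sq_eq_of_L2]
  rfl

theorem toLp_mem_tangentBall_iff {p : E} {D : ℝ} (hD : 0 ≤ D) (x : E × ℝ) :
    toLp 2 x ∈ tangentBall p D ↔ ‖x.1 - p‖ ^ 2 + (x.2 - D / 2) ^ 2 < (D / 2) ^ 2 := by
  rw [tangentBall, Metric.mem_ball, ← sq_lt_sq₀ dist_nonneg (by positivity), dist_toLp_prod_sq,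
    Real.norm_eq_abs, sq_abs]

theorem horoball_eq_preimage_tangentBall {d : ℕ} (p : EuclideanSpace ℝ (Fin d)) {D : ℝ}
    (hD : 0 ≤ D) : horoball p D = toLp 2 ⁻¹' tangentBall p D :=
  Set.ext fun x ↦ (toLp_mem_tangentBall_iff hD x).symm

variable [NormedSpace ℝ E] {D D' : ℝ}

theorem disjoint_tangentBall_iff (p p' : E) (hD : 0 < D) (hD' : 0 < D') :
    Disjoint (tangentBall p D) (tangentBall p' D') ↔ D * D' ≤ ‖p - p'‖ ^ 2 := by
  have radii_sq : (D / 2 + D' / 2) ^ 2 = D * D' + (D / 2 - D' / 2) ^ 2 := by ring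
  rw [tangentBall, tangentBall, disjoint_ball_ball_iff (half_pos hD) (half_pos hD'),
    ← sq_le_sq₀ (by positivity) dist_nonneg, dist_toLp_prod_sq, Real.norm_eq_abs, sq_abs,
    radii_sq, add_le_add_iff_right]

theorem disjoint_horoballs_separation_general (p p' : E) (hD : 0 < D) (hD' : 0 < D')
    (hdisj : Disjoint (tangentBall p D) (tangentBall p' D')) :
    D * D' ≤ ‖p - p'‖ ^ 2 ∧ p ≠ p' := by
  have separation : D * D' ≤ ‖p - p'‖ ^ 2 := (disjoint_tangentBall_iff p p' hD hD').mp hdisj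
  refine ⟨separation, ?_⟩
  rintro rfl
  have : D * D' ≤ 0 := by simpa using separation
  exact this.not_gt (mul_pos hD hD')

end TangentBall

/-- Separation of tangency points of disjoint horoballs: if the horoballs tangent at
`p` and `p'` with diameters `D` and `D'` are disjoint, then `‖p − p'‖² ≥ D·D'`;
in particular `p ≠ p'`. -/
theorem disjoint_horoballs_separation {d : ℕ} (hd : 1 ≤ d)
    (p p' : EuclideanSpace ℝ (Fin d)) (D D' : ℝ) (hD : 0 < D) (hD' : 0 < D')
    (hdisj : Disjoint (horoball p D) (horoball p' D')) :
    D * D' ≤ ‖p - p'‖ ^ 2 ∧ p ≠ p' := by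
  rw [horoball_eq_preimage_tangentBall p hD.le, horoball_eq_preimage_tangentBall p' hD'.le,
    Set.disjoint_preimage_iff (WithLp.toLp_surjective 2)] at hdisj
  exact disjoint_horoballs_separation_general p p' hD hD' hdisj
end
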